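/- Removing finitely many vertices: Let G be a connected finite abstract simplicial complex (meaning b_0(G) = 1), let v_1, …, v_m be m distinct vertices of G, let K = {{v_1}, …, {v_m}} be the corresponding zero-dimensional subcomplex, and let U = G \ K. Then b_0(U) = 0, b_1(U) = b_1(G) + m − 1, and b_p(U) = b_p(G) for all p ≥ 2. -/

import Mathlib

open Matrix

/-- A finite abstract simplicial complex: a finite nonempty collection of nonempty
finite subsets of ℕ closed under taking nonempty subsets. -/
def IsComplex (G : Finset (Finset ℕ)) : Prop :=
  G.Nonempty ∧ ∅ ∉ G ∧ ∀ x ∈ G, ∀ y : Finset ℕ, y ⊆ x → y.Nonempty → y ∈ G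

/-- A subcomplex: a set of sets closed under taking nonempty subsets. -/
def IsSubcomplex (K : Finset (Finset ℕ)) : Prop :=
  ∀ x ∈ K, ∀ y : Finset ℕ, y ⊆ x → y.Nonempty → y ∈ K

/-- The incidence sign s(x,y) = (-1)^i when y is obtained from x by deleting the
(i+1)-th smallest element of x. -/
noncomputable def incSign (x y : Finset ℕ) : ℝ :=
  (-1 : ℝ) ^ (x.filter (fun v => ∃ w ∈ x \ y, v < w)).card

/-- The exterior derivative matrix of a subset A of a simplicial complex. -/
noncomputable def extDer (A : Finset (Finset ℕ)) : Matrix A A ℝ :=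
  Matrix.of fun x y =>
    if (y : Finset ℕ) ⊆ (x : Finset ℕ) ∧ (x : Finset ℕ).card = (y : Finset ℕ).card + 1
    then incSign (x : Finset ℕ) (y : Finset ℕ) else 0

/-- The Dirac matrix D = d + dᵀ. -/
noncomputable def dirac (A : Finset (Finset ℕ)) : Matrix A A ℝ :=
  extDer A + (extDer A)ᵀ

/-- The Hodge Laplacian L = D². -/
noncomputable def hodge (A : Finset (Finset ℕ)) : Matrix A A ℝ :=
  dirac A * dirac A

/-- The block of the Hodge Laplacian acting on p-forms: the submatrix of L on
the p-simplices (sets of cardinality p+1). -/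
noncomputable def hodgeBlock (A : Finset (Finset ℕ)) (p : ℕ) :
    Matrix (A.filter fun x => x.card = p + 1) (A.filter fun x => x.card = p + 1) ℝ :=
  (hodge A).submatrix
    (fun x => ⟨x.1, (Finset.mem_filter.mp x.2).1⟩)
    (fun x => ⟨x.1, (Finset.mem_filter.mp x.2).1⟩)

/-- The p-th Betti number: the dimension of the kernel of the p-form block of the
Hodge Laplacian. -/
noncomputable def betti (A : Finset (Finset ℕ)) (p : ℕ) : ℕ :=
  Module.finrank ℝ (LinearMap.ker (Matrix.toLin' (hodgeBlock A p)))

/-!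
Write `δ_k` for the block of the exterior derivative that maps functions on `k`-element sets to
functions on `(k+1)`-element sets, and `f_k` for the number of `k`-element sets. Since `δ ∘ δ = 0`,
the block `δ_{p+1}ᵀ δ_{p+1} + δ_p δ_pᵀ` of the Laplacian has rank `rank δ_{p+1} + rank δ_p`, so
`b_p = f_{p+1} - rank δ_{p+1} - rank δ_p`. Removing vertices changes only `f_1` and `δ_1`. As `G` is
connected, `ker δ_1` consists of the constants, so `δ_1` becomes injective once its columns at some
vertices are deleted: its rank is `f_1 - 1` for `G` and `f_1 - m` for `U`.
-/

section LinearAlgebra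

variable {m n k 𝕜 : Type*} [Fintype m] [Fintype k] [Field 𝕜]

theorem range_mulVecLin_fromCols (A : Matrix n m 𝕜) (B : Matrix n k 𝕜) :
    LinearMap.range (fromCols A B).mulVecLin =
      LinearMap.range A.mulVecLin ⊔ LinearMap.range B.mulVecLin := by
  have hcol : (fromCols A B).col = Sum.elim A.col B.col := by
    ext (i | i) j <;> rfl
  rw [range_mulVecLin, range_mulVecLin, range_mulVecLin, hcol, Set.Sum.elim_range,
    Submodule.span_union]

theorem disjoint_range_mulVecLin_of_transpose_mul_eq_zero [LinearOrder 𝕜]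
    [IsStrictOrderedRing 𝕜] [Fintype n] {A : Matrix n m 𝕜} {B : Matrix n k 𝕜} (h : Aᵀ * B = 0) :
    Disjoint (LinearMap.range A.mulVecLin) (LinearMap.range B.mulVecLin) := by
  rw [Submodule.disjoint_def]
  rintro _ ⟨a, rfl⟩ ⟨b, hb⟩
  rw [mulVecLin_apply, mulVecLin_apply] at hb
  rw [← LinearMap.mem_ker, ← ker_mulVecLin_transpose_mul_self, LinearMap.mem_ker, mulVecLin_apply,
    ← mulVec_mulVec, ← hb, mulVec_mulVec, h, zero_mulVec]

theorem rank_mul_transpose_add_mul_transpose [Fintype n] [LinearOrder 𝕜] [IsStrictOrderedRing 𝕜]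
    {A : Matrix n m 𝕜} {B : Matrix n k 𝕜} (h : Aᵀ * B = 0) :
    (A * Aᵀ + B * Bᵀ).rank = A.rank + B.rank := by
  have hsum : A * Aᵀ + B * Bᵀ = fromCols A B * (fromCols A B)ᵀ := by
    rw [transpose_fromCols, fromCols_mul_fromRows]
  have hinf := disjoint_iff.mp (disjoint_range_mulVecLin_of_transpose_mul_eq_zero h)
  rw [hsum, rank_self_mul_transpose, rank, range_mulVecLin_fromCols, rank, rank,
    ← Submodule.finrank_sup_add_finrank_inf_eq, hinf, finrank_bot, add_zero]

theorem rank_add_finrank_ker_mulVecLin (A : Matrix n m 𝕜) :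
    A.rank + Module.finrank 𝕜 (LinearMap.ker A.mulVecLin) = Fintype.card m := by
  rw [rank, LinearMap.finrank_range_add_finrank_ker, Module.finrank_fintype_fun_eq_card]

theorem submatrix_id_mulVec (M : Matrix n m 𝕜) {f : k → m}
    (hf : Function.Injective f) (g : k → 𝕜) :
    M.submatrix id f *ᵥ g = M *ᵥ Function.extend f g 0 := by
  ext i
  refine Fintype.sum_of_injective f hf _ _ (fun j hj => ?_) fun j => ?_
  · rw [Function.extend_apply' _ _ _ hj, Pi.zero_apply, mul_zero]
  · simp only [hf.extend_apply, submatrix_apply, id]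

theorem ker_mulVecLin_submatrix_eq_bot {M : Matrix n m 𝕜}
    (hM : Module.finrank 𝕜 (LinearMap.ker M.mulVecLin) = 1) {w : m → 𝕜} (hw : M *ᵥ w = 0)
    {f : k → m} (hf : Function.Injective f) {i : m} (hi : i ∉ Set.range f) (hwi : w i ≠ 0) :
    LinearMap.ker (M.submatrix id f).mulVecLin = ⊥ := by
  rw [LinearMap.ker_eq_bot']
  intro g hg
  rw [mulVecLin_apply, submatrix_id_mulVec M hf] at hg
  have hw0 : (⟨w, hw⟩ : LinearMap.ker M.mulVecLin) ≠ 0 := fun h =>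
    hwi (congrFun (congrArg Subtype.val h) i)
  obtain ⟨c, hc⟩ := (finrank_eq_one_iff_of_nonzero' _ hw0).mp hM ⟨_, hg⟩
  have hcw : c • w = Function.extend f g 0 := congrArg Subtype.val hc
  have hc0 : c = 0 := by
    have := congrFun hcw i
    rw [Function.extend_apply' _ _ _ hi] at this
    exact (mul_eq_zero.mp this).resolve_right hwi
  ext j
  rw [← hf.extend_apply g 0 j, ← hcw, hc0, zero_smul, Pi.zero_apply, Pi.zero_apply]

end LinearAlgebra

section Incidence

open Finset

/-- The incidence number of two finite sets: the entry at `(x, y)` of the exterior derivative of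
any family containing both. It is defined for `y = ∅` too, which gives the augmentation. -/
noncomputable def incidence (x y : Finset ℕ) : ℝ :=
  if y ⊆ x ∧ x.card = y.card + 1 then incSign x y else 0

variable {x y : Finset ℕ} {a b : ℕ}

theorem incidence_eq_zero_of_card_ne (h : #x ≠ #y + 1) : incidence x y = 0 :=
  if_neg fun hxy => h hxy.2

theorem exists_erase_eq_of_incidence_ne_zero (h : incidence x y ≠ 0) : ∃ a ∈ x, x.erase a = y := by
  have ⟨hyx, hcard⟩ := (ite_ne_right_iff.mp h).1
  exact covBy_iff_exists_erase.mp (covBy_iff_card_sdiff_eq_one.mpr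
    ⟨hyx, by rw [card_sdiff_of_subset hyx, hcard, Nat.add_sub_cancel_left]⟩)

theorem incidence_erase (ha : a ∈ x) : incidence x (x.erase a) = (-1) ^ #{v ∈ x | v < a} := by
  rw [incidence, if_pos ⟨erase_subset a x, (card_erase_add_one ha).symm⟩, incSign,
    sdiff_erase_self ha]
  simp only [mem_singleton, exists_eq_left]

theorem incidence_empty_right (hx : #x = 1) : incidence x ∅ = 1 := by
  obtain ⟨a, rfl⟩ := card_eq_one.mp hx
  simpa [filter_singleton] using incidence_erase (mem_singleton_self a)

theorem incidence_erase_mul_add_eq_zero (ha : a ∈ x) (hb : b ∈ x) (hab : a < b) :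
    incidence x (x.erase a) * incidence (x.erase a) ((x.erase a).erase b) +
      incidence x (x.erase b) * incidence (x.erase b) ((x.erase a).erase b) = 0 := by
  have hcard : #{v ∈ x | v < b} = #{v ∈ x.erase a | v < b} + 1 := by
    rw [filter_erase, card_erase_add_one (by simp [ha, hab])]
  have hsame : #{v ∈ x.erase b | v < a} = #{v ∈ x | v < a} := by
    rw [filter_erase, erase_eq_of_notMem (by simp [hab.le])]
  rw [incidence_erase ha, incidence_erase (mem_erase.mpr ⟨hab.ne', hb⟩), erase_right_comm,
    incidence_erase hb, incidence_erase (mem_erase.mpr ⟨hab.ne, ha⟩), hcard, hsame]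
  ring

theorem sum_incidence_mul_incidence {F : Finset (Finset ℕ)}
    (hF : ∀ z, y ⊆ z → z ⊆ x → #z = #y + 1 → z ∈ F) :
    ∑ z ∈ F, incidence x z * incidence z y = 0 := by
  by_contra hsum
  obtain ⟨z, -, hz⟩ := exists_ne_zero_of_sum_ne_zero hsum
  obtain ⟨a, ha, rfl⟩ := exists_erase_eq_of_incidence_ne_zero (left_ne_zero_of_mul hz)
  obtain ⟨b, hb, rfl⟩ := exists_erase_eq_of_incidence_ne_zero (right_ne_zero_of_mul hz)
  clear hz
  wlog hab : a < b generalizing a b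
  · rw [erase_right_comm] at hF hsum
    exact this b (mem_of_mem_erase hb) a (mem_erase.mpr ⟨(ne_of_mem_erase hb).symm, ha⟩) hF hsum
      (lt_of_le_of_ne (not_lt.mp hab) (ne_of_mem_erase hb))
  have hbx := mem_of_mem_erase hb
  have hpair : ∑ z ∈ {x.erase a, x.erase b}, incidence x z * incidence z ((x.erase a).erase b) =
      ∑ z ∈ F, incidence x z * incidence z ((x.erase a).erase b) := by
    refine sum_subset ?_ fun z _ hz => ?_
    · have hcard := card_erase_add_one hb
      rw [insert_subset_iff, singleton_subset_iff]
      exact ⟨hF _ (erase_subset b _) (erase_subset a x) hcard.symm, hF _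
        (erase_subset_erase b (erase_subset a x)) (erase_subset b x)
        (by rw [hcard, card_erase_of_mem ha, card_erase_of_mem hbx])⟩
    · contrapose! hz
      obtain ⟨c, hc, rfl⟩ := exists_erase_eq_of_incidence_ne_zero (left_ne_zero_of_mul hz)
      have hsub := (ite_ne_right_iff.mp (right_ne_zero_of_mul hz)).1.1
      have hcab : c = a ∨ c = b := by
        by_contra! hne
        exact notMem_erase c x (hsub (by simp [hne, hc]))
      rcases hcab with rfl | rfl <;> simp
  rw [← hpair, sum_pair, incidence_erase_mul_add_eq_zero ha hbx hab] at hsum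
  · exact hsum rfl
  · exact fun h => hab.ne ((erase_injOn x).eq_iff ha hbx |>.mp h)

/-- The rectangular block of the exterior derivative with rows in `E` and columns in `F`. -/
noncomputable def incidenceMatrix (E F : Finset (Finset ℕ)) : Matrix E F ℝ :=
  Matrix.of fun x y => incidence x y

theorem incidenceMatrix_mul_incidenceMatrix {A : Finset (Finset ℕ)}
    (hA : (A : Set (Finset ℕ)).OrdConnected) (k : ℕ) :
    incidenceMatrix (A # (k + 2)) (A # (k + 1)) * incidenceMatrix (A # (k + 1)) (A # k) = 0 := by
  ext x y
  have hx := mem_slice.mp x.2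
  have hy := mem_slice.mp y.2
  refine (sum_coe_sort (A # (k + 1)) fun z => incidence x z * incidence z y).trans
    (sum_incidence_mul_incidence fun z hyz hzx hz => mem_slice.mpr ⟨?_, by rw [hz, hy.2]⟩)
  exact hA.out hy.1 hx.1 ⟨hyz, hzx⟩

theorem incidence_add_mul_incidence_add {p : ℕ} (hx : #x = p + 1) (hy : #y = p + 1)
    (z : Finset ℕ) :
    (incidence x z + incidence z x) * (incidence z y + incidence y z) =
      (if #z = p + 2 then incidence z x * incidence z y else 0) +
        if #z = p then incidence x z * incidence y z else 0 := by
  by_cases hup : #z = p + 2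
  · rw [incidence_eq_zero_of_card_ne (x := x) (by omega),
      incidence_eq_zero_of_card_ne (x := y) (by omega), if_pos hup, if_neg (by omega)]
    ring
  · rw [incidence_eq_zero_of_card_ne (y := x) (by omega),
      incidence_eq_zero_of_card_ne (y := y) (by omega), if_neg hup]
    split_ifs with hdown
    · ring
    · rw [incidence_eq_zero_of_card_ne (x := x) (by omega)]
      ring

theorem hodgeBlock_eq (A : Finset (Finset ℕ)) (p : ℕ) :
    hodgeBlock A p =
      (incidenceMatrix (A # (p + 2)) (A # (p + 1)))ᵀ * incidenceMatrix (A # (p + 2)) (A # (p + 1)) +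
        incidenceMatrix (A # (p + 1)) (A # p) * (incidenceMatrix (A # (p + 1)) (A # p))ᵀ := by
  ext x y
  have hsum (k : ℕ) (g : Finset ℕ → ℝ) : ∑ z : A # k, g z = ∑ z ∈ A, if #z = k then g z else 0 := by
    rw [sum_coe_sort, slice, sum_filter]
  calc hodgeBlock A p x y
    _ = ∑ z : A, (incidence x z + incidence z x) * (incidence z y + incidence y z) := rfl
    _ = _ := by
      rw [sum_coe_sort A fun z : Finset ℕ =>
        (incidence x z + incidence z x) * (incidence z y + incidence y z)]
      simp_rw [incidence_add_mul_incidence_add (mem_filter.mp x.2).2 (mem_filter.mp y.2).2,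
        sum_add_distrib, ← hsum]
      rfl

theorem rank_hodgeBlock {A : Finset (Finset ℕ)} (hA : (A : Set (Finset ℕ)).OrdConnected) (p : ℕ) :
    (hodgeBlock A p).rank = (incidenceMatrix (A # (p + 2)) (A # (p + 1))).rank +
      (incidenceMatrix (A # (p + 1)) (A # p)).rank := by
  have hsq := incidenceMatrix_mul_incidenceMatrix hA p
  have hrank := rank_mul_transpose_add_mul_transpose
    (A := (incidenceMatrix (A # (p + 2)) (A # (p + 1)))ᵀ) hsq
  rw [transpose_transpose, rank_transpose] at hrank
  rw [hodgeBlock_eq]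
  exact hrank

theorem betti_add_rank_add_rank {A : Finset (Finset ℕ)} (hA : (A : Set (Finset ℕ)).OrdConnected)
    (p : ℕ) :
    betti A p + (incidenceMatrix (A # (p + 2)) (A # (p + 1))).rank +
      (incidenceMatrix (A # (p + 1)) (A # p)).rank = #(A # (p + 1)) := by
  have hnull : (hodgeBlock A p).rank + betti A p = #(A # (p + 1)) := by
    rw [betti, toLin'_apply', rank_add_finrank_ker_mulVecLin, Fintype.card_coe, slice]
  rw [← hnull, rank_hodgeBlock hA]
  ring

theorem betti_zero_add_rank {A : Finset (Finset ℕ)} (hA : (A : Set (Finset ℕ)).OrdConnected)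
    (hempty : ∅ ∉ A) : betti A 0 + (incidenceMatrix (A # 2) (A # 1)).rank = #(A # 1) := by
  have hslice : A # 0 = ∅ := eq_empty_of_forall_notMem fun x hx => by
    rw [mem_slice, card_eq_zero] at hx
    exact hempty (hx.2 ▸ hx.1)
  have hrank : (incidenceMatrix (A # 1) (A # 0)).rank = 0 := by
    simpa [hslice] using rank_le_card_width (incidenceMatrix (A # 1) (A # 0))
  rw [← betti_add_rank_add_rank hA 0, hrank, add_zero]

theorem betti_zero_eq_finrank_ker {A : Finset (Finset ℕ)} (hA : (A : Set (Finset ℕ)).OrdConnected)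
    (hempty : ∅ ∉ A) :
    betti A 0 = Module.finrank ℝ (LinearMap.ker (incidenceMatrix (A # 2) (A # 1)).mulVecLin) := by
  have hnull := rank_add_finrank_ker_mulVecLin (incidenceMatrix (A # 2) (A # 1))
  rw [Fintype.card_coe, ← betti_zero_add_rank hA hempty, add_comm] at hnull
  exact (Nat.add_right_cancel hnull).symm

end Incidence

section RemoveVertices

open Finset

theorem slice_sdiff {α : Type*} [DecidableEq α] (A B : Finset (Finset α)) (k : ℕ) :
    (A \ B) # k = A # k \ B := by
  grind [mem_slice]

theorem slice_sdiff_of_ne {α : Type*} [DecidableEq α] {A B : Finset (Finset α)} {j k : ℕ}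
    (hB : B ⊆ A # j) (hkj : k ≠ j) : (A \ B) # k = A # k := by
  rw [slice_sdiff, Finset.sdiff_eq_self_iff_disjoint, disjoint_left]
  exact fun _ hx hxB => hkj (eq_of_mem_slice hx (hB hxB))

variable {G K : Finset (Finset ℕ)}

theorem IsComplex.ordConnected_sdiff (hG : IsComplex G) (hK : IsSubcomplex K) :
    ((G \ K : Finset (Finset ℕ)) : Set (Finset ℕ)).OrdConnected := by
  refine Set.ordConnected_def.mpr fun y hy x hx z ⟨hyz, hzx⟩ => ?_
  rw [mem_coe, mem_sdiff] at hx hy ⊢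
  have hy_nonempty : y.Nonempty := nonempty_iff_ne_empty.mpr fun h => hG.2.1 (h ▸ hy.1)
  exact ⟨hG.2.2 x hx.1 z hzx (hy_nonempty.mono hyz), fun hz => hy.2 (hK z hz y hyz hy_nonempty)⟩

theorem IsComplex.ordConnected (hG : IsComplex G) : (G : Set (Finset ℕ)).OrdConnected := by
  simpa using hG.ordConnected_sdiff (K := ∅) (by simp [IsSubcomplex])

theorem isSubcomplex_of_subset_slice_one (hK : K ⊆ G # 1) : IsSubcomplex K := by
  intro x hx y hyx hy
  obtain ⟨a, rfl⟩ := card_eq_one.mp (mem_slice.mp (hK hx)).2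
  rwa [hy.subset_singleton_iff.mp hyx]

-- The constant function `1` on vertices is the coboundary of `∅`, so this is again `δ ∘ δ = 0`.
theorem IsComplex.incidenceMatrix_mulVec_one (hG : IsComplex G) :
    incidenceMatrix (G # 2) (G # 1) *ᵥ 1 = 0 := by
  ext x
  have hx := mem_slice.mp x.2
  calc (incidenceMatrix (G # 2) (G # 1) *ᵥ 1) x
    _ = ∑ z : G # 1, incidence x z * 1 := rfl
    _ = ∑ z : G # 1, incidence x z * incidence z ∅ :=
      sum_congr rfl fun z _ => by rw [incidence_empty_right (mem_slice.mp z.2).2]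
    _ = ∑ z ∈ G # 1, incidence x z * incidence z ∅ :=
      sum_coe_sort (G # 1) fun z => incidence x z * incidence z ∅
    _ = 0 := sum_incidence_mul_incidence fun z _ hzx hz =>
      mem_slice.mpr ⟨hG.2.2 x hx.1 z hzx (card_pos.mp (by omega)), hz⟩

theorem IsComplex.betti_zero_sdiff (hG : IsComplex G) (hconn : betti G 0 = 1) (hK : K ⊆ G # 1)
    (hK_nonempty : K.Nonempty) : betti (G \ K) 0 = 0 := by
  obtain ⟨w, hw⟩ := hK_nonempty
  have hGU : (G \ K) # 1 ⊆ G # 1 := slice_sdiff G K 1 ▸ sdiff_subset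
  rw [betti_zero_eq_finrank_ker hG.ordConnected hG.2.1] at hconn
  rw [betti_zero_eq_finrank_ker (hG.ordConnected_sdiff (isSubcomplex_of_subset_slice_one hK))
    fun h => hG.2.1 (mem_sdiff.mp h).1, slice_sdiff_of_ne hK (k := 2) (by decide)]
  have hker := ker_mulVecLin_submatrix_eq_bot hconn hG.incidenceMatrix_mulVec_one
    (Set.inclusion_injective hGU) (i := ⟨w, hK hw⟩) (by
      rintro ⟨z, hz⟩
      have hzw : (z : Finset ℕ) = w := congrArg Subtype.val hz
      exact (mem_sdiff.mp (mem_slice.mp z.2).1).2 (hzw ▸ hw)) one_ne_zero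
  exact Submodule.finrank_eq_zero.mpr hker

theorem IsComplex.betti_one_sdiff (hG : IsComplex G) (hK : K ⊆ G # 1) :
    betti (G \ K) 1 + betti G 0 = betti G 1 + #K + betti (G \ K) 0 := by
  have hU := hG.ordConnected_sdiff (isSubcomplex_of_subset_slice_one hK)
  have hcard : #((G \ K) # 1) + #K = #(G # 1) := by
    rw [slice_sdiff, card_sdiff_add_card_eq_card hK]
  have htwo : (G \ K) # 2 = G # 2 := slice_sdiff_of_ne hK (by decide)
  have hthree : (G \ K) # 3 = G # 3 := slice_sdiff_of_ne hK (by decide)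
  have hzeroG := betti_zero_add_rank hG.ordConnected hG.2.1
  have hzeroU := betti_zero_add_rank hU fun h => hG.2.1 (mem_sdiff.mp h).1
  have honeG : betti G 1 + (incidenceMatrix (G # 3) (G # 2)).rank +
      (incidenceMatrix (G # 2) (G # 1)).rank = #(G # 2) :=
    betti_add_rank_add_rank hG.ordConnected 1
  have honeU : betti (G \ K) 1 + (incidenceMatrix ((G \ K) # 3) ((G \ K) # 2)).rank +
      (incidenceMatrix ((G \ K) # 2) ((G \ K) # 1)).rank = #((G \ K) # 2) :=
    betti_add_rank_add_rank hU 1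
  rw [htwo] at hzeroU
  rw [hthree, htwo] at honeU
  omega

theorem IsComplex.betti_sdiff_of_two_le (hG : IsComplex G) (hK : K ⊆ G # 1) {p : ℕ} (hp : 2 ≤ p) :
    betti (G \ K) p = betti G p := by
  have hU := betti_add_rank_add_rank
    (hG.ordConnected_sdiff (isSubcomplex_of_subset_slice_one hK)) p
  have hbetti := betti_add_rank_add_rank hG.ordConnected p
  rw [slice_sdiff_of_ne hK (by omega), slice_sdiff_of_ne hK (by omega),
    slice_sdiff_of_ne hK (by omega)] at hU
  omega

end RemoveVertices

/-- **Removing finitely many vertices.** Let G be a connected complex (b_0(G) = 1), let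
v 0, …, v (m-1) be m ≥ 1 distinct vertices of G, let K = {{v i}} be the corresponding
zero-dimensional subcomplex and U = G \ K. Then b_0(U) = 0, b_1(U) = b_1(G) + m - 1 and
b_p(U) = b_p(G) for p ≥ 2. -/
theorem betti_remove_vertices (G : Finset (Finset ℕ)) (hG : IsComplex G)
    (hconn : betti G 0 = 1) (m : ℕ) (hm : 1 ≤ m) (v : Fin m → ℕ)
    (hv : Function.Injective v) (hvG : ∀ i, ({v i} : Finset ℕ) ∈ G) :
    betti (G \ Finset.univ.image fun i => ({v i} : Finset ℕ)) 0 = 0 ∧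
      betti (G \ Finset.univ.image fun i => ({v i} : Finset ℕ)) 1 = betti G 1 + m - 1 ∧
      ∀ p, 2 ≤ p →
        betti (G \ Finset.univ.image fun i => ({v i} : Finset ℕ)) p = betti G p := by
  set K := Finset.univ.image fun i => ({v i} : Finset ℕ)
  have hK : K ⊆ G.slice 1 :=
    Finset.image_subset_iff.mpr fun i _ => Finset.mem_slice.mpr ⟨hvG i, Finset.card_singleton _⟩
  have hcard : K.card = m := by
    rw [Finset.card_image_of_injective _ fun i j hij =>
      hv (Finset.singleton_injective hij), Finset.card_fin]
  have hzero := hG.betti_zero_sdiff hconn hK (Finset.card_pos.mp (by omega))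
  have hone := hG.betti_one_sdiff hK
  exact ⟨hzero, by omega, fun p hp => hG.betti_sdiff_of_two_le hK hp⟩
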